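/- arXiv:0712.1014 — 3 statements merged into one kernel-verified Lean document; each statement's English description precedes it below -/
import Mathlib

section
/- For every finite simple graph G, the equality λ(G) = β(G) + β₁(G) holds if and only if α(G) = β(G). -/
open SimpleGraph

/-- A matching of `G`, given as a finite set of edges of `G` that are pairwise non-adjacent. -/
def IsMatchingE {V : Type*} (G : SimpleGraph V) (M : Finset (Sym2 V)) : Prop :=
  ↑M ⊆ G.edgeSet ∧ ∀ e ∈ M, ∀ f ∈ M, e ≠ f → ∀ v : V, ¬(v ∈ e ∧ v ∈ f)

/-- A vertex is covered by a set of edges if some edge of it is incident to the vertex. -/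
def Covers {V : Type*} (M : Finset (Sym2 V)) (v : V) : Prop := ∃ e ∈ M, v ∈ e

/-- `β(G)`: the maximum size of a matching of `G`. -/
noncomputable def gBeta {V : Type*} (G : SimpleGraph V) : ℕ :=
  sSup {n | ∃ M : Finset (Sym2 V), IsMatchingE G M ∧ M.card = n}

/-- `λ(G)`: the maximum of `|H| + |H'|` over pairs `(H, H')` of disjoint matchings of `G`. -/
noncomputable def gLam {V : Type*} (G : SimpleGraph V) : ℕ :=
  sSup {n | ∃ H H' : Finset (Sym2 V), IsMatchingE G H ∧ IsMatchingE G H' ∧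
    Disjoint H H' ∧ H.card + H'.card = n}

/-- `α(G)`: the maximum of `|H|` over pairs `(H, H')` of disjoint matchings of `G`
with `|H| + |H'| = λ(G)`. -/
noncomputable def gAlpha {V : Type*} (G : SimpleGraph V) : ℕ :=
  sSup {n | ∃ H H' : Finset (Sym2 V), IsMatchingE G H ∧ IsMatchingE G H' ∧
    Disjoint H H' ∧ H.card + H'.card = gLam G ∧ H.card = n}

/-- `β₁(G)`: the maximum of `β(G \ F)` over maximum matchings `F` of `G`. -/
noncomputable def gBeta1 {V : Type*} (G : SimpleGraph V) : ℕ :=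
  sSup {n | ∃ F : Finset (Sym2 V), IsMatchingE G F ∧ F.card = gBeta G ∧
    gBeta (G.deleteEdges ↑F) = n}

/-- Membership in `M₂(G)`: `(H, H')` is a pair of disjoint matchings of `G` with
`|H| + |H'| = λ(G)` and `|H| = α(G)`. -/
def InM2 {V : Type*} (G : SimpleGraph V) (H H' : Finset (Sym2 V)) : Prop :=
  IsMatchingE G H ∧ IsMatchingE G H' ∧ Disjoint H H' ∧
  H.card + H'.card = gLam G ∧ H.card = gAlpha G

/-- Membership in `M₂(G, M)`: pairs from `M₂(G)` maximizing `|M ∩ (H ∪ H')|`. -/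
def InM2M {V : Type*} [DecidableEq V] (G : SimpleGraph V) (M H H' : Finset (Sym2 V)) : Prop :=
  InM2 G H H' ∧ ∀ K K' : Finset (Sym2 V), InM2 G K K' →
    (M ∩ (K ∪ K')).card ≤ (M ∩ (H ∪ H')).card

/-- The degree of a vertex `v` in the graph `F`. -/
noncomputable def fdeg {V : Type*} (F : SimpleGraph V) (v : V) : ℕ := (F.neighborSet v).ncard

/-- The spanner: two paths `a₁a₂a₃a₄a₅` and `b₁b₂b₃b₄b₅` joined by the edge `a₃b₃`.
Vertices `0..4` are `a₁..a₅` and `5..9` are `b₁..b₅`. -/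
def Spanner10 : SimpleGraph (Fin 10) :=
  SimpleGraph.fromEdgeSet
    {s(0, 1), s(1, 2), s(2, 3), s(3, 4), s(5, 6), s(6, 7), s(7, 8), s(8, 9), s(2, 7)}

/-- An S-forest: every connected component is isomorphic to the spanner. -/
def IsSForest {V : Type*} (F : SimpleGraph V) : Prop :=
  ∀ c : F.ConnectedComponent, Nonempty ((F.induce c.supp) ≃g Spanner10)

/-- `U(F)`: edges of `F` incident to a vertex of degree 1. -/
def USet {V : Type*} (F : SimpleGraph V) : Set (Sym2 V) :=
  {e | e ∈ F.edgeSet ∧ ∃ v ∈ e, fdeg F v = 1}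

/-- `L(F)`: edges of `F` not in `U(F)` incident to a vertex of degree 2. -/
def LSet {V : Type*} (F : SimpleGraph V) : Set (Sym2 V) :=
  {e | e ∈ F.edgeSet ∧ e ∉ USet F ∧ ∃ v ∈ e, fdeg F v = 2}

/-- `w` is the base of the 1-vertex `u` of `F`: a 3-vertex at `F`-distance 2 from `u`. -/
def IsBase {V : Type*} (F : SimpleGraph V) (u w : V) : Prop :=
  fdeg F w = 3 ∧ F.dist u w = 2

/-- `Δ(G, F)`: edges of `G` joining a 1-vertex of `F` to its base. -/
def DeltaSet {V : Type*} (G F : SimpleGraph V) : Set (Sym2 V) :=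
  {e | e ∈ G.edgeSet ∧ ∃ u w : V, e = s(u, w) ∧ fdeg F u = 1 ∧ IsBase F u w}

/-- `B(G, F) = E(G) \ (U(F) ∪ L(F) ∪ Δ(G, F))`. -/
def BSet {V : Type*} (G F : SimpleGraph V) : Set (Sym2 V) :=
  G.edgeSet \ (USet F ∪ LSet F ∪ DeltaSet G F)

/-- Condition (a): no 1-vertex of `F` is incident to an edge from `B(G, F)`. -/
def CondA {V : Type*} (G F : SimpleGraph V) : Prop :=
  ∀ v : V, fdeg F v = 1 → ∀ e ∈ BSet G F, v ∉ e

/-- Condition (b): if a 1-vertex `u` of `F` is incident to an edge from `Δ(G, F)`, then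
the 2-vertex of `F` adjacent to `u` in `F` is not incident to any edge from `B(G, F)`. -/
def CondB {V : Type*} (G F : SimpleGraph V) : Prop :=
  ∀ u v : V, fdeg F u = 1 → (∃ e ∈ DeltaSet G F, u ∈ e) →
    F.Adj u v → fdeg F v = 2 → ∀ e ∈ BSet G F, v ∉ e

/-- Condition (c): for every `L(F)`-`B(G, F)` alternating even closed trail of `G`
containing an edge joining two 2-vertices of `F`, the graph formed by its edges belonging
to `B(G, F)` is not bipartite (2-colorable). -/
def CondC {V : Type*} (G F : SimpleGraph V) : Prop :=
  ∀ (n : ℕ) (e : ℕ → Sym2 V),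
    1 ≤ n →
    (∀ i j, i < 2 * n → j < 2 * n → e i = e j → i = j) →
    (∀ i, i < 2 * n → e i ∈ G.edgeSet) →
    (∀ i, i + 1 < 2 * n → ∃ v : V, v ∈ e i ∧ v ∈ e (i + 1)) →
    (∃ v : V, v ∈ e (2 * n - 1) ∧ v ∈ e 0) →
    (∀ i, i < 2 * n → (i % 2 = 0 → e i ∈ LSet F) ∧ (i % 2 = 1 → e i ∈ BSet G F)) →
    (∃ i, i < 2 * n ∧ ∀ v ∈ e i, fdeg F v = 2) →
    ¬ (SimpleGraph.fromEdgeSet {f | ∃ i, i < 2 * n ∧ f = e i ∧ f ∈ BSet G F}).Colorable 2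

theorem nat_sup {s : Set ℕ} (b : BddAbove s) (n : s.Nonempty) : sSup s ∈ s :=
  Nat.sSup_mem n b

theorem mat_mono {V : Type*} {G G' : SimpleGraph V} (h : G.edgeSet ⊆ G'.edgeSet)
    {M : Finset (Sym2 V)} (hM : IsMatchingE G M) : IsMatchingE G' M :=
  ⟨hM.1.trans h, hM.2⟩

theorem mat_empty {V : Type*} (G : SimpleGraph V) : IsMatchingE G ∅ := by
  simp [IsMatchingE]

theorem mat_del {V : Type*} {G : SimpleGraph V} {F M : Finset (Sym2 V)} :
    IsMatchingE (G.deleteEdges ↑F) M ↔ IsMatchingE G M ∧ Disjoint F M := by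
  unfold IsMatchingE
  rw [SimpleGraph.edgeSet_deleteEdges, Set.subset_sdiff, Finset.disjoint_coe,
    disjoint_comm]
  tauto

theorem beta_bdd {V : Type*} [Fintype V] [DecidableEq V] (G : SimpleGraph V) :
    BddAbove {n | ∃ M : Finset (Sym2 V), IsMatchingE G M ∧ M.card = n} := by
  refine ⟨Fintype.card (Sym2 V), ?_⟩
  rintro n ⟨M, -, rfl⟩
  exact Finset.card_le_univ M

theorem beta_le {V : Type*} [Fintype V] [DecidableEq V] {G : SimpleGraph V}
    {M : Finset (Sym2 V)} (hM : IsMatchingE G M) : M.card ≤ gBeta G :=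
  le_csSup (beta_bdd G) ⟨M, hM, rfl⟩

theorem beta_mem {V : Type*} [Fintype V] [DecidableEq V] (G : SimpleGraph V) :
    ∃ M : Finset (Sym2 V), IsMatchingE G M ∧ M.card = gBeta G :=
  nat_sup (beta_bdd G) ⟨_, ∅, mat_empty G, rfl⟩

theorem lam_bdd {V : Type*} [Fintype V] [DecidableEq V] (G : SimpleGraph V) :
    BddAbove {n | ∃ H H' : Finset (Sym2 V), IsMatchingE G H ∧ IsMatchingE G H' ∧
      Disjoint H H' ∧ H.card + H'.card = n} := by
  refine ⟨gBeta G + gBeta G, ?_⟩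
  rintro n ⟨H, H', h, h', -, rfl⟩
  exact add_le_add (beta_le h) (beta_le h')

theorem lam_le {V : Type*} [Fintype V] [DecidableEq V] {G : SimpleGraph V}
    {H H' : Finset (Sym2 V)} (h : IsMatchingE G H) (h' : IsMatchingE G H')
    (d : Disjoint H H') : H.card + H'.card ≤ gLam G :=
  le_csSup (lam_bdd G) ⟨H, H', h, h', d, rfl⟩

theorem lam_mem {V : Type*} [Fintype V] [DecidableEq V] (G : SimpleGraph V) :
    ∃ H H' : Finset (Sym2 V), IsMatchingE G H ∧ IsMatchingE G H' ∧
      Disjoint H H' ∧ H.card + H'.card = gLam G :=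
  nat_sup (lam_bdd G) ⟨_, ∅, ∅, mat_empty G, mat_empty G, by simp, rfl⟩

theorem alpha_bdd {V : Type*} [Fintype V] [DecidableEq V] (G : SimpleGraph V) :
    BddAbove {n | ∃ H H' : Finset (Sym2 V), IsMatchingE G H ∧ IsMatchingE G H' ∧
      Disjoint H H' ∧ H.card + H'.card = gLam G ∧ H.card = n} := by
  refine ⟨gBeta G, ?_⟩
  rintro n ⟨H, H', h, -, -, -, rfl⟩
  exact beta_le h

theorem alpha_mem {V : Type*} [Fintype V] [DecidableEq V] (G : SimpleGraph V) :
    ∃ H H' : Finset (Sym2 V), IsMatchingE G H ∧ IsMatchingE G H' ∧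
      Disjoint H H' ∧ H.card + H'.card = gLam G ∧ H.card = gAlpha G := by
  obtain ⟨H, H', h, h', d, e⟩ := lam_mem G
  exact nat_sup (alpha_bdd G) ⟨_, H, H', h, h', d, e, rfl⟩

theorem beta1_bdd {V : Type*} [Fintype V] [DecidableEq V] (G : SimpleGraph V) :
    BddAbove {n | ∃ F : Finset (Sym2 V), IsMatchingE G F ∧ F.card = gBeta G ∧
      gBeta (G.deleteEdges ↑F) = n} := by
  refine ⟨gBeta G, ?_⟩
  rintro n ⟨F, -, -, rfl⟩
  obtain ⟨M, hM, e⟩ := beta_mem (G.deleteEdges (↑F : Set (Sym2 V)))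
  rw [← e]
  exact beta_le (mat_del.1 hM).1

theorem beta1_mem {V : Type*} [Fintype V] [DecidableEq V] (G : SimpleGraph V) :
    ∃ F : Finset (Sym2 V), IsMatchingE G F ∧ F.card = gBeta G ∧
      gBeta (G.deleteEdges ↑F) = gBeta1 G := by
  obtain ⟨M, hM, e⟩ := beta_mem G
  exact nat_sup (beta1_bdd G) ⟨_, M, hM, e, rfl⟩

/-- `λ(G) = β(G) + β₁(G)` if and only if `α(G) = β(G)`. -/
theorem stmt1 {V : Type*} [Fintype V] [DecidableEq V] (G : SimpleGraph V) :
    gLam G = gBeta G + gBeta1 G ↔ gAlpha G = gBeta G := by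
  obtain ⟨F, hF, eF, e1⟩ := beta1_mem G
  obtain ⟨M, hM, eM⟩ := beta_mem (G.deleteEdges (↑F : Set (Sym2 V)))
  obtain ⟨hM, d⟩ := mat_del.1 hM
  obtain ⟨H, H', h, h', dH, eL, eA⟩ := alpha_mem G
  have key := lam_le hF hM d
  constructor
  · intro e
    apply le_antisymm
    · rw [← eA]
      exact beta_le h
    · exact le_csSup (alpha_bdd G) ⟨F, M, hF, hM, d, by omega, eF⟩
  · intro e
    have h1 : H'.card ≤ gBeta (G.deleteEdges (↑H : Set (Sym2 V))) :=
      beta_le (mat_del.2 ⟨h', dH⟩)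
    have h2 : gBeta (G.deleteEdges (↑H : Set (Sym2 V))) ≤ gBeta1 G :=
      le_csSup (beta1_bdd G) ⟨H, h, eA.trans e, rfl⟩
    omega
end

section
/- Let S be the spanner and (H, H') ∈ M₂(S). Then every vertex of S of degree 2 and every vertex of degree 3 is covered both by H and by H'. -/
open SimpleGraph

/-- The edges of the spanner as a finset. -/
def spE : Finset (Sym2 (Fin 10)) :=
  {s(0, 1), s(1, 2), s(2, 3), s(3, 4), s(5, 6), s(6, 7), s(7, 8), s(8, 9), s(2, 7)}

lemma sp_edgeSet : Spanner10.edgeSet = (↑spE : Set (Sym2 (Fin 10))) := by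
  have hd : ∀ e ∈ spE, ¬ e.IsDiag := by decide
  ext e
  rw [Spanner10, SimpleGraph.edgeSet_fromEdgeSet]
  have h1 : ∀ e, e ∈ ({s(0, 1), s(1, 2), s(2, 3), s(3, 4), s(5, 6), s(6, 7), s(7, 8), s(8, 9),
      s(2, 7)} : Set (Sym2 (Fin 10))) ↔ e ∈ spE := by
    intro e; simp [spE]
  constructor
  · intro h
    exact (h1 e).1 h.1
  · intro h
    exact ⟨(h1 e).2 h, hd e h⟩

lemma sp_lam : 8 ≤ gLam Spanner10 := by
  unfold gLam
  apply le_csSup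
  · refine ⟨Fintype.card (Sym2 (Fin 10)) + Fintype.card (Sym2 (Fin 10)), ?_⟩
    rintro n ⟨H, H', -, -, -, rfl⟩
    exact Nat.add_le_add (Finset.card_le_univ _) (Finset.card_le_univ _)
  · refine ⟨{s(0, 1), s(2, 3), s(5, 6), s(7, 8)}, {s(1, 2), s(3, 4), s(6, 7), s(8, 9)},
      ⟨?_, ?_⟩, ⟨?_, ?_⟩, ?_, ?_⟩
    · rw [sp_edgeSet, Finset.coe_subset]; decide
    · set_option maxRecDepth 10000 in decide
    · rw [sp_edgeSet, Finset.coe_subset]; decide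
    · set_option maxRecDepth 10000 in decide
    · decide
    · decide

lemma sp_leaf (v w : Fin 10) (h : ∀ u, s(v, u) ∈ spE ↔ u = w) : fdeg Spanner10 v = 1 := by
  have : Spanner10.neighborSet v = {w} := by
    ext u
    rw [SimpleGraph.mem_neighborSet, ← SimpleGraph.mem_edgeSet, sp_edgeSet]
    simpa using h u
  rw [fdeg, this, Set.ncard_singleton]

/-- Indicator of membership. -/
def spInd (M : Finset (Sym2 (Fin 10))) (e : Sym2 (Fin 10)) : ℕ := if e ∈ M then 1 else 0

lemma sp_card (M : Finset (Sym2 (Fin 10))) (h : IsMatchingE Spanner10 M) :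
    M.card = spInd M s(0, 1) + spInd M s(1, 2) + spInd M s(2, 3) + spInd M s(3, 4)
      + spInd M s(5, 6) + spInd M s(6, 7) + spInd M s(7, 8) + spInd M s(8, 9)
      + spInd M s(2, 7) := by
  have hs : M ⊆ spE := by
    have := h.1
    rwa [sp_edgeSet, Finset.coe_subset] at this
  have h1 : M.card = ∑ e ∈ spE, spInd M e := by
    simp only [spInd]
    rw [← Finset.card_filter, Finset.filter_mem_eq_inter, Finset.inter_eq_right.2 hs]
  rw [h1, spE]
  repeat rw [Finset.sum_insert (by decide)]
  rw [Finset.sum_singleton]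
  ring

lemma sp_pair (M : Finset (Sym2 (Fin 10))) (h : IsMatchingE Spanner10 M) (e f : Sym2 (Fin 10))
    (hne : e ≠ f) (v : Fin 10) (he : v ∈ e) (hf : v ∈ f) : spInd M e + spInd M f ≤ 1 := by
  unfold spInd
  by_cases h1 : e ∈ M <;> by_cases h2 : f ∈ M <;> simp [h1, h2]
  exact h.2 e h1 f h2 hne v ⟨he, hf⟩

lemma sp_triple (M : Finset (Sym2 (Fin 10))) (h : IsMatchingE Spanner10 M)
    (e f g : Sym2 (Fin 10)) (h1 : e ≠ f) (h2 : e ≠ g) (h3 : f ≠ g) (v : Fin 10) (he : v ∈ e)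
    (hf : v ∈ f) (hg : v ∈ g) : spInd M e + spInd M f + spInd M g ≤ 1 := by
  have a := sp_pair M h e f h1 v he hf
  have b := sp_pair M h e g h2 v he hg
  have c := sp_pair M h f g h3 v hf hg
  omega

lemma sp_disj (M N : Finset (Sym2 (Fin 10))) (h : Disjoint M N) (e : Sym2 (Fin 10)) :
    spInd M e + spInd N e ≤ 1 := by
  unfold spInd
  by_cases h1 : e ∈ M <;> by_cases h2 : e ∈ N <;> simp [h1, h2]
  exact Finset.disjoint_left.1 h h1 h2

lemma sp_cov (M : Finset (Sym2 (Fin 10))) (e f : Sym2 (Fin 10)) (v : Fin 10)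
    (he : v ∈ e) (hf : v ∈ f) (h : 1 ≤ spInd M e + spInd M f) : Covers M v := by
  unfold spInd at h
  by_cases h1 : e ∈ M
  · exact ⟨e, h1, he⟩
  by_cases h2 : f ∈ M
  · exact ⟨f, h2, hf⟩
  simp [h1, h2] at h

/-- for the spanner `S` and `(H, H') ∈ M₂(S)`, every vertex of degree 2 or 3
is covered both by `H` and by `H'`. -/
theorem stmt8 (H H' : Finset (Sym2 (Fin 10))) (h : InM2 Spanner10 H H')
    (v : Fin 10) (hv : fdeg Spanner10 v = 2 ∨ fdeg Spanner10 v = 3) :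
    Covers H v ∧ Covers H' v := by
  obtain ⟨hH, hH', hd, hs, -⟩ := h
  have hl := sp_lam
  rw [← hs, sp_card H hH, sp_card H' hH'] at hl
  have d1 := sp_disj H H' hd s(0, 1)
  have d2 := sp_disj H H' hd s(1, 2)
  have d3 := sp_disj H H' hd s(2, 3)
  have d4 := sp_disj H H' hd s(3, 4)
  have d5 := sp_disj H H' hd s(5, 6)
  have d6 := sp_disj H H' hd s(6, 7)
  have d7 := sp_disj H H' hd s(7, 8)
  have d8 := sp_disj H H' hd s(8, 9)
  have d9 := sp_disj H H' hd s(2, 7)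
  have key : ∀ M, IsMatchingE Spanner10 M →
      spInd M s(0, 1) + spInd M s(1, 2) ≤ 1 ∧ spInd M s(1, 2) + spInd M s(2, 3) ≤ 1 ∧
      spInd M s(2, 3) + spInd M s(3, 4) ≤ 1 ∧ spInd M s(5, 6) + spInd M s(6, 7) ≤ 1 ∧
      spInd M s(6, 7) + spInd M s(7, 8) ≤ 1 ∧ spInd M s(7, 8) + spInd M s(8, 9) ≤ 1 ∧
      spInd M s(1, 2) + spInd M s(2, 3) + spInd M s(2, 7) ≤ 1 ∧
      spInd M s(6, 7) + spInd M s(7, 8) + spInd M s(2, 7) ≤ 1 := by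
    intro M hM
    exact ⟨sp_pair M hM _ _ (by decide) 1 (by decide) (by decide),
      sp_pair M hM _ _ (by decide) 2 (by decide) (by decide),
      sp_pair M hM _ _ (by decide) 3 (by decide) (by decide),
      sp_pair M hM _ _ (by decide) 6 (by decide) (by decide),
      sp_pair M hM _ _ (by decide) 7 (by decide) (by decide),
      sp_pair M hM _ _ (by decide) 8 (by decide) (by decide),
      sp_triple M hM _ _ _ (by decide) (by decide) (by decide) 2 (by decide) (by decide)
        (by decide),
      sp_triple M hM _ _ _ (by decide) (by decide) (by decide) 7 (by decide) (by decide)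
        (by decide)⟩
  obtain ⟨k1, k2, k3, k4, k5, k6, k7, k8⟩ := key H hH
  obtain ⟨j1, j2, j3, j4, j5, j6, j7, j8⟩ := key H' hH'
  have z1 : 0 ≤ spInd H s(2, 7) := Nat.zero_le _
  have z2 : 0 ≤ spInd H' s(2, 7) := Nat.zero_le _
  have n1 : fdeg Spanner10 0 = 1 := sp_leaf 0 1 (by decide)
  have n2 : fdeg Spanner10 4 = 1 := sp_leaf 4 3 (by decide)
  have n3 : fdeg Spanner10 5 = 1 := sp_leaf 5 6 (by decide)
  have n4 : fdeg Spanner10 9 = 1 := sp_leaf 9 8 (by decide)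
  have c (e f : Sym2 (Fin 10)) (v : Fin 10) (he : v ∈ e) (hf : v ∈ f)
      (h1 : 1 ≤ spInd H e + spInd H f ∧ 1 ≤ spInd H' e + spInd H' f) :
      Covers H v ∧ Covers H' v := ⟨sp_cov H e f v he hf h1.1, sp_cov H' e f v he hf h1.2⟩
  clear key hs
  match v, hv with
  | 0, hv => omega
  | 1, _ => exact c s(0, 1) s(1, 2) 1 (by decide) (by decide) (by constructor <;> linarith)
  | 2, _ => exact c s(1, 2) s(2, 3) 2 (by decide) (by decide) (by constructor <;> linarith)
  | 3, _ => exact c s(2, 3) s(3, 4) 3 (by decide) (by decide) (by constructor <;> linarith)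
  | 4, hv => omega
  | 5, hv => omega
  | 6, _ => exact c s(5, 6) s(6, 7) 6 (by decide) (by decide) (by constructor <;> linarith)
  | 7, _ => exact c s(6, 7) s(7, 8) 7 (by decide) (by decide) (by constructor <;> linarith)
  | 8, _ => exact c s(7, 8) s(8, 9) 8 (by decide) (by decide) (by constructor <;> linarith)
  | 9, hv => omega
end

section
/- Let F be an S-forest and (H, H') ∈ M₂(F). Then H ∪ H' = U(F) ∪ L(F); equivalently, H ∪ H' consists exactly of those edges of F that have an endpoint of degree at most 2 (i.e., all edges of F except the edges joining two vertices of degree 3). -/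
open SimpleGraph

/-- First endpoint of the `k`-th spanner edge. -/
def spA : Fin 9 → Fin 10 := ![0, 1, 2, 3, 5, 6, 7, 8, 2]

/-- Second endpoint of the `k`-th spanner edge. -/
def spB : Fin 9 → Fin 10 := ![1, 2, 3, 4, 6, 7, 8, 9, 7]

/-- Decidable spanner adjacency. -/
def spAdj (i j : Fin 10) : Bool :=
  decide (∃ k, (spA k = i ∧ spB k = j) ∨ (spA k = j ∧ spB k = i))

/-- The degrees in the spanner. -/
def spDeg : Fin 10 → ℕ := ![1, 2, 3, 2, 1, 1, 2, 3, 2, 1]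

lemma spanner_adj (i j : Fin 10) : Spanner10.Adj i j ↔ spAdj i j = true := by
  unfold Spanner10
  simp only [fromEdgeSet_adj, Set.mem_insert_iff, Set.mem_singleton_iff]
  revert i j
  decide

lemma spAdj_iff (i j : Fin 10) : spAdj i j = true ↔
    ∃ k, (spA k = i ∧ spB k = j) ∨ (spA k = j ∧ spB k = i) := by
  simp [spAdj]

lemma spDeg_eq (i : Fin 10) : (Finset.univ.filter fun j => spAdj i j = true).card = spDeg i := by
  revert i; decide

lemma card_bound (s : Finset (Fin 9)) (h1 : ¬ (1 ∈ s ∧ 2 ∈ s ∧ 8 ∈ s))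
    (h2 : ¬ (5 ∈ s ∧ 6 ∈ s ∧ 8 ∈ s)) :
    s.card ≤ 8 ∧ (s.card = 8 → ∀ i, i ∈ s ↔ i ≠ 8) := by
  by_cases h8 : (8 : Fin 9) ∈ s
  · have hex : ∃ x y : Fin 9, x ≠ y ∧ x ∉ s ∧ y ∉ s := by
      by_cases a : (1 : Fin 9) ∈ s <;> by_cases b : (5 : Fin 9) ∈ s
      · exact ⟨2, 6, by decide, by tauto, by tauto⟩
      · exact ⟨2, 5, by decide, by tauto, by tauto⟩
      · exact ⟨1, 6, by decide, by tauto, by tauto⟩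
      · exact ⟨1, 5, by decide, by tauto, by tauto⟩
    obtain ⟨x, y, hxy, hx, hy⟩ := hex
    have hsub : s ⊆ (Finset.univ.erase x).erase y := by
      intro z hz
      simp only [Finset.mem_erase, Finset.mem_univ, and_true]
      exact ⟨fun h => hy (h ▸ hz), fun h => hx (h ▸ hz)⟩
    have := Finset.card_le_card hsub
    rw [Finset.card_erase_of_mem (by simp [hxy.symm]), Finset.card_erase_of_mem (by simp)] at this
    simp at this
    omega
  · have hsub : s ⊆ Finset.univ.erase 8 := by
      intro z hz
      simp only [Finset.mem_erase, Finset.mem_univ, and_true]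
      exact fun h => h8 (h ▸ hz)
    have hc : (Finset.univ.erase (8 : Fin 9)).card = 8 := by decide
    refine ⟨hc ▸ Finset.card_le_card hsub, fun h i => ?_⟩
    rw [Finset.eq_of_subset_of_card_le hsub (by omega)]
    simp

lemma sp_core {V C : Type*} [Fintype V] [DecidableEq V] [Fintype C] [DecidableEq C]
    (F : SimpleGraph V) (P : C → Fin 10 → V)
    (hinj : ∀ c i c' j, P c i = P c' j → c = c' ∧ i = j)
    (hsurj : ∀ v, ∃ c i, v = P c i)
    (hadj : ∀ c i j, F.Adj (P c i) (P c j) ↔ spAdj i j = true)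
    (hcomp : ∀ c i c' j, F.Adj (P c i) (P c' j) → c = c')
    (H H' : Finset (Sym2 V)) (h : InM2 F H H') :
    (↑H ∪ ↑H' : Set (Sym2 V)) = USet F ∪ LSet F := by
  obtain ⟨hH, hH', hd, hl, -⟩ := h
  set E : C × Fin 9 → Sym2 V := fun p => s(P p.1 (spA p.2), P p.1 (spB p.2)) with hE
  have hmemE : ∀ c i k, P c i ∈ E (c, k) ↔ i = spA k ∨ i = spB k := by
    intro c i k
    simp only [hE, Sym2.mem_iff]
    constructor
    · rintro (h | h)
      · exact Or.inl (hinj _ _ _ _ h).2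
      · exact Or.inr (hinj _ _ _ _ h).2
    · rintro (h | h) <;> simp [h]
  have hmemE' : ∀ v c k, v ∈ E (c, k) → ∃ i, v = P c i := by
    intro v c k hv
    simp only [hE, Sym2.mem_iff] at hv
    rcases hv with h | h <;> exact ⟨_, h⟩
  have hEinj : Function.Injective E := by
    rintro ⟨c, k⟩ ⟨c', k'⟩ h
    have h1 : P c (spA k) ∈ E (c', k') := by rw [← h, hmemE]; simp
    have h2 : P c (spB k) ∈ E (c', k') := by rw [← h, hmemE]; simp
    obtain ⟨i, hi⟩ := hmemE' _ _ _ h1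
    obtain ⟨rfl, -⟩ := hinj _ _ _ _ hi
    rw [hmemE] at h1 h2
    have : ∀ k k' : Fin 9, (spA k = spA k' ∨ spA k = spB k') →
      (spB k = spA k' ∨ spB k = spB k') → k = k' := by decide
    rw [this k k' h1 h2]
  have hEedge : ∀ e, e ∈ F.edgeSet ↔ ∃ p, e = E p := by
    intro e
    induction e with
    | _ u v =>
    rw [mem_edgeSet]
    constructor
    · intro huv
      obtain ⟨c, i, rfl⟩ := hsurj u
      obtain ⟨c', j, rfl⟩ := hsurj v
      obtain rfl := hcomp _ _ _ _ huv
      rw [hadj, spAdj_iff] at huv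
      obtain ⟨k, ⟨rfl, rfl⟩ | ⟨rfl, rfl⟩⟩ := huv
      · exact ⟨(c, k), rfl⟩
      · exact ⟨(c, k), Sym2.eq_swap⟩
    · rintro ⟨⟨c, k⟩, hk⟩
      rw [← mem_edgeSet, hk]
      simp only [hE, mem_edgeSet, hadj, spAdj_iff]
      exact ⟨k, Or.inl ⟨rfl, rfl⟩⟩
  have hdeg : ∀ c i, fdeg F (P c i) = spDeg i := by
    intro c i
    have : F.neighborSet (P c i) =
        P c '' ↑(Finset.univ.filter fun j => spAdj i j = true) := by
      ext v
      simp only [mem_neighborSet, Set.mem_image, Finset.coe_filter, Finset.mem_univ, true_and,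
        Set.mem_setOf_eq]
      constructor
      · intro hv
        obtain ⟨c', j, rfl⟩ := hsurj v
        obtain rfl := hcomp _ _ _ _ hv
        exact ⟨j, (hadj _ _ _).1 hv, rfl⟩
      · rintro ⟨j, hj, rfl⟩
        exact (hadj _ _ _).2 hj
    rw [fdeg, this, Set.ncard_image_of_injective _ (fun a b hab => (hinj _ _ _ _ hab).2),
      Set.ncard_coe_finset, spDeg_eq]
  have hUL : ∀ p, E p ∈ USet F ∪ LSet F ↔ p.2 ≠ 8 := by
    rintro ⟨c, k⟩
    have key : E (c, k) ∈ USet F ∪ LSet F ↔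
        (spDeg (spA k) ≤ 2 ∨ spDeg (spB k) ≤ 2) := by
      have hed : E (c, k) ∈ F.edgeSet := (hEedge _).2 ⟨_, rfl⟩
      have h1 : ∀ n, (∃ v ∈ E (c, k), fdeg F v = n) ↔
          (spDeg (spA k) = n ∨ spDeg (spB k) = n) := by
        intro n
        simp only [hE, Sym2.mem_iff]
        simp [hdeg]
      have hp : ∀ i, 1 ≤ spDeg i := by decide
      have hpa := hp (spA k)
      have hpb := hp (spB k)
      simp only [USet, LSet, Set.mem_union, Set.mem_setOf_eq, hed, true_and, h1]
      omega
    rw [key]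
    clear key
    change _ ↔ k ≠ 8
    revert k
    decide
  -- general pigeonhole at a vertex
  have hpig : ∀ x y z : Sym2 V, x ≠ y → x ≠ z → y ≠ z → (∃ v, v ∈ x ∧ v ∈ y ∧ v ∈ z) →
      ¬ (x ∈ H ∪ H' ∧ y ∈ H ∪ H' ∧ z ∈ H ∪ H') := by
    rintro x y z hxy hxz hyz ⟨v, vx, vy, vz⟩ ⟨hx, hy, hz⟩
    rw [Finset.mem_union] at hx hy hz
    have a1 := fun a b => hH.2 x a y b hxy v ⟨vx, vy⟩
    have a2 := fun a b => hH.2 x a z b hxz v ⟨vx, vz⟩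
    have a3 := fun a b => hH.2 y a z b hyz v ⟨vy, vz⟩
    have b1 := fun a b => hH'.2 x a y b hxy v ⟨vx, vy⟩
    have b2 := fun a b => hH'.2 x a z b hxz v ⟨vx, vz⟩
    have b3 := fun a b => hH'.2 y a z b hyz v ⟨vy, vz⟩
    tauto
  let s : C → Finset (Fin 9) := fun c => Finset.univ.filter fun k => E (c, k) ∈ H ∪ H'
  have hs : ∀ c k, k ∈ s c ↔ E (c, k) ∈ H ∪ H' := by intro c k; simp [s]
  have hneE : ∀ c (k k' : Fin 9), k ≠ k' → E (c, k) ≠ E (c, k') := by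
    intro c k k' hk he
    exact hk (Prod.ext_iff.1 (hEinj he)).2
  have hb : ∀ c, (s c).card ≤ 8 ∧ ((s c).card = 8 → ∀ i, i ∈ s c ↔ i ≠ 8) := by
    intro c
    apply card_bound
    · simp only [hs]
      exact hpig _ _ _ (hneE _ _ _ (by decide)) (hneE _ _ _ (by decide)) (hneE _ _ _ (by decide))
        ⟨P c 2, (hmemE _ _ _).2 (by decide), (hmemE _ _ _).2 (by decide),
          (hmemE _ _ _).2 (by decide)⟩
    · simp only [hs]
      exact hpig _ _ _ (hneE _ _ _ (by decide)) (hneE _ _ _ (by decide)) (hneE _ _ _ (by decide))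
        ⟨P c 7, (hmemE _ _ _).2 (by decide), (hmemE _ _ _).2 (by decide),
          (hmemE _ _ _).2 (by decide)⟩
  -- cardinality of the union
  have hcard : (H ∪ H').card = ∑ c, (s c).card := by
    have : H ∪ H' = (Finset.univ.sigma s).image (fun p => E (p.1, p.2)) := by
      ext e
      simp only [Finset.mem_image, Finset.mem_sigma, Finset.mem_univ, true_and, hs]
      constructor
      · intro he
        have hed : e ∈ F.edgeSet := by
          rcases Finset.mem_union.1 he with h | h
          · exact hH.1 h
          · exact hH'.1 h
        obtain ⟨⟨c, k⟩, rfl⟩ := (hEedge e).1 hed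
        exact ⟨⟨c, k⟩, he, rfl⟩
      · rintro ⟨p, hp, rfl⟩
        exact hp
    rw [this, Finset.card_image_of_injective, Finset.card_sigma]
    rintro ⟨c, k⟩ ⟨c', k'⟩ h
    have := hEinj h
    simp only [Prod.mk.injEq] at this
    obtain ⟨rfl, rfl⟩ := this
    rfl
  -- any set of pairwise disjoint edge indices gives a matching
  have hmk : ∀ t : Finset (Fin 9),
      (∀ k ∈ t, ∀ k' ∈ t, k ≠ k' → ∀ i, ¬ ((i = spA k ∨ i = spB k) ∧ (i = spA k' ∨ i = spB k'))) →
      IsMatchingE F ((Finset.univ ×ˢ t).image E) := by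
    intro t ht
    constructor
    · intro e he
      simp only [Finset.coe_image, Set.mem_image] at he
      obtain ⟨p, -, rfl⟩ := he
      exact (hEedge _).2 ⟨p, rfl⟩
    · intro e he f hf hef v hv
      obtain ⟨⟨c, k⟩, hk, rfl⟩ := Finset.mem_image.1 he
      obtain ⟨⟨c', k'⟩, hk', rfl⟩ := Finset.mem_image.1 hf
      simp only [Finset.mem_product, Finset.mem_univ, true_and] at hk hk'
      obtain ⟨i, rfl⟩ := hmemE' _ _ _ hv.1
      obtain ⟨j, hj⟩ := hmemE' _ _ _ hv.2
      obtain ⟨rfl, -⟩ := hinj _ _ _ _ hj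
      rw [hmemE, hmemE] at hv
      exact ht k hk k' hk' (fun h => hef (by rw [h])) i hv
  have hlam : 8 * Fintype.card C ≤ gLam F := by
    apply le_csSup
    · refine ⟨Fintype.card (Sym2 V) + Fintype.card (Sym2 V), ?_⟩
      rintro n ⟨K, K', -, -, -, rfl⟩
      exact Nat.add_le_add (Finset.card_le_univ _) (Finset.card_le_univ _)
    · refine ⟨(Finset.univ ×ˢ {0, 2, 4, 6}).image E, (Finset.univ ×ˢ {1, 3, 5, 7}).image E,
        hmk _ (by decide), hmk _ (by decide), ?_, ?_⟩
      · rw [Finset.disjoint_image hEinj, Finset.disjoint_product]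
        right
        decide
      · rw [Finset.card_image_of_injective _ hEinj, Finset.card_image_of_injective _ hEinj,
          Finset.card_product, Finset.card_product, Finset.card_univ]
        have h1 : ({0, 2, 4, 6} : Finset (Fin 9)).card = 4 := by decide
        have h2 : ({1, 3, 5, 7} : Finset (Fin 9)).card = 4 := by decide
        rw [h1, h2]
        ring
  rw [← hl, ← Finset.card_union_of_disjoint hd, hcard] at hlam
  have hall : ∀ c, (s c).card = 8 := by
    have hsum : ∑ c, (s c).card = ∑ _c : C, 8 := by
      apply le_antisymm
      · exact Finset.sum_le_sum fun c _ => (hb c).1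
      · simpa [mul_comm] using hlam
    intro c
    exact (Finset.sum_eq_sum_iff_of_le (fun c _ => (hb c).1)).1 hsum c (Finset.mem_univ c)
  ext e
  rw [← Finset.coe_union, Finset.mem_coe]
  by_cases hed : e ∈ F.edgeSet
  · obtain ⟨⟨c, k⟩, rfl⟩ := (hEedge e).1 hed
    rw [hUL, ← hs]
    exact (hb c).2 (hall c) k
  · constructor
    · intro he
      rcases Finset.mem_union.1 he with h | h
      · exact absurd (hH.1 h) hed
      · exact absurd (hH'.1 h) hed
    · rintro (h | h) <;> exact absurd h.1 hed

/-- for an S-forest `F` and `(H, H') ∈ M₂(F)`, one has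
`H ∪ H' = U(F) ∪ L(F)`. -/
theorem stmt11 {V : Type*} [Fintype V] [DecidableEq V] (F : SimpleGraph V)
    (hF : IsSForest F) (H H' : Finset (Sym2 V)) (h : InM2 F H H') :
    (↑H ∪ ↑H' : Set (Sym2 V)) = USet F ∪ LSet F := by
  classical
  have e : ∀ c : F.ConnectedComponent, (F.induce c.supp) ≃g Spanner10 :=
    fun c => Classical.choice (hF c)
  haveI : Fintype F.ConnectedComponent := Fintype.ofFinite _
  have hP : ∀ c i, F.connectedComponentMk ((e c).symm i).1 = c := fun c i => ((e c).symm i).2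
  refine sp_core (C := F.ConnectedComponent) F (fun c i => ((e c).symm i).1)
    ?_ ?_ ?_ ?_ H H' h
  · intro c i c' j hij
    have hc : c = c' := by
      rw [← hP c i, ← hP c' j]
      exact congrArg _ hij
    subst hc
    exact ⟨rfl, (e c).symm.injective (Subtype.ext hij)⟩
  · intro v
    refine ⟨F.connectedComponentMk v, e _ ⟨v, rfl⟩, ?_⟩
    simp
  · intro c i j
    rw [← spanner_adj, ← (e c).symm.map_adj_iff]
    rfl
  · intro c i c' j hij
    rw [← hP c i, ← hP c' j]
    exact ConnectedComponent.sound hij.reachable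
end
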